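/- arXiv:1812.09582 — 4 statements merged into one kernel-verified Lean document; each statement's English description precedes it below -/
import Mathlib

section
/- Consider the coupled system–optimizer dynamics of anytime real-time MPC. Assume: (a) the stage cost l : ℝⁿ×ℝᵐ → ℝ≥0 is continuous and positive definite (l(x,u) = 0 if and only if (x,u) = (0,0)); (b) there exist class-K∞ functions α̲, ᾱ such that α̲(‖(U,x)‖) ≤ J_N(U,x) ≤ ᾱ(‖(U,x)‖) for all (U,x) ∈ ℝ^{Nm}×ℝⁿ; (c) J_N(Ψ_tw(U,x), f(x,Π₀U)) − J_N(U,x) ≤ −l(x,Π₀U) for all (U,x); (d) there is a continuous function γ : ℝ^{Nm}×ℝⁿ → ℝ≥0 with γ(U,x) = 0 if and only if J_N(U,x) = J_N^*(x), such that J_N(Ψ_o(U,x),x) − J_N(U,x) ≤ −γ(U,x) for all (U,x). Then for every sequence of iteration numbers i_T(k) ∈ ℕ₊, the origin (U,x) = (0,0) is globally asymptotically stable for the closed loop: (stability) for every ε > 0 there is δ > 0 such that ‖(U(0),x(0))‖ ≤ δ implies ‖(U(k),x(k))‖ ≤ ε for all k ∈ ℕ; (global attractivity) for every initial condition (U(0),x(0)),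 the closed-loop trajectory satisfies (U(k),x(k)) → (0,0) as k → ∞. -/
open Filter Topology

/-!
Let `z k = (U k, x k)` and let `w k` be `z k` after the temporal warm start. The cost drops by the
stage cost at `z k` from `z k` to `w k`, and by at least `γ (w k)` from `w k` to `z (k + 1)`; later
optimizer iterations only help. Hence the cost is nonincreasing, which gives stability, and both
decrements tend to zero. All `z k` and `w k` lie in a compact set, so the vanishing stage cost
forces `x k → 0`. Every limit point of `w k` thus has zero state and zero `γ`, so it minimizes the
cost at the zero state and is therefore `0`; that is, `w k → 0`. Since the cost of `z (k + 1)` is at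
most that of `w k`, also `z k → 0`.
-/

theorem tendsto_comp_of_isCompact_of_tendsto_comp {ι A B C : Type*} [TopologicalSpace A]
    [TopologicalSpace B] [T2Space B] [TopologicalSpace C] {F : Filter ι} {K : Set A}
    (hK : IsCompact K) {g : A → B} (hg : Continuous g) {π : A → C} (hπ : Continuous π)
    {b : B} {c : C} (hgπ : ∀ p ∈ K, g p = b → π p = c) {u : ι → A} (hu : ∀ᶠ i in F, u i ∈ K)
    (hgu : Tendsto (g ∘ u) F (𝓝 b)) : Tendsto (π ∘ u) F (𝓝 c) := by
  refine (tendsto_iff_ultrafilter _ _ _).2 fun 𝒰 h𝒰 => ?_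
  obtain ⟨p, hpK, hup⟩ := hK.ultrafilter_le_nhds' (𝒰.map u) (h𝒰 hu)
  have hgp : g p = b := tendsto_nhds_unique ((hg.tendsto p).comp hup) (hgu.mono_left h𝒰)
  exact hgπ p hpK hgp ▸ (hπ.tendsto p).comp hup

theorem tendsto_zero_of_add_le_of_bddBelow {a d : ℕ → ℝ} (ha : BddBelow (Set.range a))
    (hd : ∀ k, 0 ≤ d k) (had : ∀ k, a (k + 1) + d k ≤ a k) : Tendsto d atTop (𝓝 0) := by
  have ha_anti : Antitone a := antitone_nat_of_succ_le fun k => by linarith [hd k, had k]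
  have ha_lim := tendsto_atTop_ciInf ha_anti ha
  have hdiff : Tendsto (fun k => a k - a (k + 1)) atTop (𝓝 0) := by
    simpa only [sub_self] using ha_lim.sub ((tendsto_add_atTop_iff_nat 1).2 ha_lim)
  exact squeeze_zero hd (fun k => by linarith [had k]) hdiff

theorem properSpace_withLp_prod (p : ENNReal) [Fact (1 ≤ p)] (E F : Type*) [MetricSpace E]
    [ProperSpace E] [MetricSpace F] [ProperSpace F] : ProperSpace (WithLp p (E × F)) :=
  (WithLp.prod_antilipschitzWith_toLp p E F).properSpace (WithLp.prod_continuous_toLp p E F)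
    (WithLp.toLp_surjective p)

theorem continuous_of_forall_apply_eq {ι κ : Type*} {p : EuclideanSpace ℝ ι → EuclideanSpace ℝ κ}
    {σ : κ → ι} (hp : ∀ U i, p U i = U (σ i)) : Continuous p := by
  have hp_eq : p = fun U => WithLp.toLp 2 fun i => U (σ i) := by
    ext U i
    exact hp U i
  rw [hp_eq]
  fun_prop

section Lyapunov

variable {Z : Type*} [SeminormedAddCommGroup Z] {V : Z → ℝ} {α β : ℝ → ℝ}

theorem norm_lt_of_lt_comp (hα : MonotoneOn α (Set.Ici 0)) (hαV : ∀ z, α ‖z‖ ≤ V z) {r : ℝ}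
    (hr : 0 ≤ r) {z : Z} (hz : V z < α r) : ‖z‖ < r := by
  by_contra! hrz
  exact ((hα hr (norm_nonneg z) hrz).trans (hαV z)).not_gt hz

theorem isBounded_sublevel_of_comp_norm_le (hα : Tendsto α atTop atTop)
    (hαV : ∀ z, α ‖z‖ ≤ V z) (c : ℝ) : Bornology.IsBounded {z | V z ≤ c} := by
  obtain ⟨R, hR⟩ := (hα.eventually_gt_atTop c).exists_forall_of_atTop
  refine isBounded_iff_forall_norm_le.2 ⟨R, fun z hz => ?_⟩
  by_contra! hRz
  exact ((hαV z).trans hz).not_gt (hR _ hRz.le)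

theorem tendsto_zero_of_le_comp_norm (hβ : Tendsto β (𝓝[≥] 0) (𝓝 0)) (hV : ∀ z, 0 ≤ V z)
    (hVβ : ∀ z, V z ≤ β ‖z‖) : Tendsto V (𝓝 0) (𝓝 0) := by
  refine squeeze_zero hV hVβ (hβ.comp (tendsto_nhdsWithin_iff.2 ⟨tendsto_norm_zero, ?_⟩))
  exact .of_forall norm_nonneg

theorem tendsto_zero_of_tendsto_comp (hα : MonotoneOn α (Set.Ici 0)) (hα_pos : ∀ r > 0, 0 < α r)
    (hαV : ∀ z, α ‖z‖ ≤ V z) {ι : Type*} {F : Filter ι} {z : ι → Z}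
    (hz : Tendsto (V ∘ z) F (𝓝 0)) : Tendsto z F (𝓝 0) := by
  refine NormedAddGroup.tendsto_nhds_zero.2 fun ε hε => ?_
  filter_upwards [hz.eventually_lt_const (hα_pos ε hε)] with i hi
  exact norm_lt_of_lt_comp hα hαV hε.le hi

theorem eq_zero_of_comp_norm_le {Z : Type*} [NormedAddCommGroup Z] {V : Z → ℝ}
    (hα_pos : ∀ r > 0, 0 < α r) (hαV : ∀ z, α ‖z‖ ≤ V z) {z : Z} (hz : V z ≤ 0) : z = 0 := by
  by_contra hne
  exact ((hαV z).trans hz).not_gt (hα_pos _ (norm_pos_iff.2 hne))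

theorem exists_forall_norm_le_of_antitone (hα : MonotoneOn α (Set.Ici 0))
    (hα_pos : ∀ r > 0, 0 < α r) (hαV : ∀ z, α ‖z‖ ≤ V z) (hV : Tendsto V (𝓝 0) (𝓝 0)) {ε : ℝ}
    (hε : 0 < ε) :
    ∃ δ > 0, ∀ z : ℕ → Z, (Antitone fun k => V (z k)) → ‖z 0‖ ≤ δ → ∀ k, ‖z k‖ ≤ ε := by
  obtain ⟨δ, hδ, hδV⟩ := Metric.nhds_basis_closedBall.eventually_iff.1
    (hV.eventually_lt_const (hα_pos ε hε))
  refine ⟨δ, hδ, fun z hz hz0 k => (norm_lt_of_lt_comp hα hαV hε.le ?_).le⟩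
  exact (hz k.zero_le).trans_lt (hδV (mem_closedBall_zero_iff.2 hz0))

end Lyapunov

/-- A sequence `z` along which `V` decreases in two stages: by at least `ℓ (z k)` on passing to an
intermediate point `w k`, then by at least `γ (w k)` on passing to `z (k + 1)`. In real-time MPC,
`w k` is the warm-started pair and the second stage is the optimizer. -/
structure IsTwoStageDescent {Z : Type*} (V ℓ γ : Z → ℝ) (z w : ℕ → Z) : Prop where
  intermediate_le : ∀ k, V (w k) + ℓ (z k) ≤ V (z k)
  succ_le : ∀ k, V (z (k + 1)) + γ (w k) ≤ V (w k)

namespace IsTwoStageDescent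

variable {Z : Type*} {V ℓ γ : Z → ℝ} {z w : ℕ → Z}

theorem antitone (h : IsTwoStageDescent V ℓ γ z w) (hℓ : ∀ z, 0 ≤ ℓ z) (hγ : ∀ z, 0 ≤ γ z) :
    Antitone fun k => V (z k) :=
  antitone_nat_of_succ_le fun k => by
    linarith [h.intermediate_le k, h.succ_le k, hℓ (z k), hγ (w k)]

theorem tendsto_decrements (h : IsTwoStageDescent V ℓ γ z w) (hV : ∀ z, 0 ≤ V z)
    (hℓ : ∀ z, 0 ≤ ℓ z) (hγ : ∀ z, 0 ≤ γ z) :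
    Tendsto (fun k => ℓ (z k)) atTop (𝓝 0) ∧ Tendsto (fun k => γ (w k)) atTop (𝓝 0) := by
  have hbdd : BddBelow (Set.range fun k => V (z k)) := ⟨0, Set.forall_mem_range.2 fun k => hV (z k)⟩
  constructor
  · exact tendsto_zero_of_add_le_of_bddBelow hbdd (fun k => hℓ (z k)) fun k => by
      linarith [h.intermediate_le k, h.succ_le k, hγ (w k)]
  · exact tendsto_zero_of_add_le_of_bddBelow hbdd (fun k => hγ (w k)) fun k => by
      linarith [h.intermediate_le k, h.succ_le k, hℓ (z k)]

theorem tendsto_zero [SeminormedAddCommGroup Z] [ProperSpace Z] {Y : Type*} [TopologicalSpace Y]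
    [T2Space Y] {π : Z → Y} {y₀ : Y} {α : ℝ → ℝ} (h : IsTwoStageDescent V ℓ γ z w)
    (hπw : ∀ k, π (w k) = π (z (k + 1))) (hπ : Continuous π)
    (hα : MonotoneOn α (Set.Ici 0)) (hα_pos : ∀ r > 0, 0 < α r) (hα_top : Tendsto α atTop atTop)
    (hαV : ∀ z, α ‖z‖ ≤ V z) (hV_nonneg : ∀ z, 0 ≤ V z) (hV : Tendsto V (𝓝 0) (𝓝 0))
    (hℓ : Continuous ℓ) (hℓ_nonneg : ∀ z, 0 ≤ ℓ z) (hℓ_zero : ∀ z, ℓ z = 0 → π z = y₀)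
    (hγ : Continuous γ) (hγ_nonneg : ∀ z, 0 ≤ γ z)
    (hγ_zero : ∀ z, γ z = 0 → π z = y₀ → z = 0) : Tendsto z atTop (𝓝 0) := by
  obtain ⟨hℓz, hγw⟩ := h.tendsto_decrements hV_nonneg hℓ_nonneg hγ_nonneg
  have hV_le : ∀ k, V (z k) ≤ V (z 0) := fun k => h.antitone hℓ_nonneg hγ_nonneg k.zero_le
  let K := closure {p | V p ≤ V (z 0)}
  have hK : IsCompact K := (isBounded_sublevel_of_comp_norm_le hα_top hαV _).isCompact_closure
  have hzK : ∀ k, z k ∈ K := fun k => subset_closure (hV_le k)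
  have hwK : ∀ k, w k ∈ K := fun k => subset_closure <| show V (w k) ≤ V (z 0) by
    linarith [h.intermediate_le k, hℓ_nonneg (z k), hV_le k]
  have hπz : Tendsto (π ∘ z) atTop (𝓝 y₀) :=
    tendsto_comp_of_isCompact_of_tendsto_comp hK hℓ hπ (fun p _ => hℓ_zero p)
      (.of_forall hzK) hℓz
  have hπw_lim : Tendsto (π ∘ w) atTop (𝓝 y₀) :=
    (hπz.comp (tendsto_add_atTop_nat 1)).congr fun k => (hπw k).symm
  have hw : Tendsto w atTop (𝓝 0) :=
    tendsto_comp_of_isCompact_of_tendsto_comp hK (hγ.prodMk hπ) continuous_id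
      (fun p _ hp => hγ_zero p (Prod.ext_iff.1 hp).1 (Prod.ext_iff.1 hp).2)
      (.of_forall hwK) (hγw.prodMk_nhds hπw_lim)
  have hVz_le : ∀ k, V (z (k + 1)) ≤ V (w k) := fun k => by
    linarith [h.succ_le k, hγ_nonneg (w k)]
  have hVz_succ : Tendsto (fun k => V (z (k + 1))) atTop (𝓝 0) :=
    squeeze_zero (fun k => hV_nonneg _) hVz_le (hV.comp hw)
  exact tendsto_zero_of_tendsto_comp hα hα_pos hαV ((tendsto_add_atTop_iff_nat 1).1 hVz_succ)

end IsTwoStageDescent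

theorem add_le_of_iterate {E : Type*} {J γ : E → ℝ} {Ψ : E → E} (hγ : ∀ U, 0 ≤ γ U)
    (hΨ : ∀ U, J (Ψ U) - J U ≤ -γ U) {W : ℕ → E} (hW : ∀ i, W (i + 1) = Ψ (W i)) {i : ℕ}
    (hi : 1 ≤ i) : J (W i) + γ (W 0) ≤ J (W 0) := by
  have hstep : ∀ j, J (W (j + 1)) + γ (W j) ≤ J (W j) := fun j => by
    rw [hW]
    linarith [hΨ (W j)]
  have hanti : Antitone fun j => J (W j) :=
    antitone_nat_of_succ_le fun j => by linarith [hstep j, hγ (W j)]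
  exact (add_le_add_left (hanti hi) _).trans (hstep 0)

/-- The first-input feedback is absorbed into `s U x = f x (Π₀ U)` and `ℓ U x = l x (Π₀ U)`. -/
theorem isTwoStageDescent_closedLoop {E F : Type*} {s : E → F → F} {ℓ J γ : E → F → ℝ}
    {Ψtw Ψo : E → F → E} (htw : ∀ U x, J (Ψtw U x) (s U x) - J U x ≤ -ℓ U x) (hγ : ∀ U x, 0 ≤ γ U x)
    (ho : ∀ U x, J (Ψo U x) x - J U x ≤ -γ U x) {Φ : ℕ → E → F → E}
    (hΦ0 : ∀ U x, Φ 0 U x = Ψtw U x) (hΦs : ∀ i U x, Φ (i + 1) U x = Ψo (Φ i U x) (s U x))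
    {U : ℕ → E} {X : ℕ → F} {iT : ℕ → ℕ} (hiT : ∀ k, 1 ≤ iT k)
    (hU : ∀ k, U (k + 1) = Φ (iT k) (U k) (X k)) (hX : ∀ k, X (k + 1) = s (U k) (X k)) :
    IsTwoStageDescent (Z := WithLp 2 (E × F)) (fun z => J z.fst z.snd) (fun z => ℓ z.fst z.snd)
      (fun z => γ z.fst z.snd) (fun k => WithLp.toLp 2 (U k, X k))
      (fun k => WithLp.toLp 2 (Ψtw (U k) (X k), X (k + 1))) where
  intermediate_le k := by
    change J (Ψtw (U k) (X k)) (X (k + 1)) + ℓ (U k) (X k) ≤ J (U k) (X k)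
    rw [hX]
    linarith [htw (U k) (X k)]
  succ_le k := by
    simp only [hU, hX, ← hΦ0]
    exact add_le_of_iterate (J := (J · _)) (γ := (γ · _)) (Ψ := (Ψo · _)) (fun W => hγ W _)
      (fun W => ho W _) (W := (Φ · (U k) (X k))) (fun i => hΦs i (U k) (X k)) (hiT k)

theorem stmt_0_general {E F : Type*} [NormedAddCommGroup E] [NormedAddCommGroup F]
    [ProperSpace E] [ProperSpace F] {s : E → F → F} {ℓ J γ : E → F → ℝ}
    {Ψtw Ψo : E → F → E} {α β : ℝ → ℝ}
    (hℓ_cont : Continuous fun p : E × F => ℓ p.1 p.2) (hℓ_nonneg : ∀ U x, 0 ≤ ℓ U x)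
    (hℓ_zero : ∀ U x, ℓ U x = 0 → x = 0)
    (hα_mono : MonotoneOn α (Set.Ici 0)) (hα_pos : ∀ r > 0, 0 < α r)
    (hα_top : Tendsto α atTop atTop) (hβ : Tendsto β (𝓝[≥] 0) (𝓝 0))
    (hJ_lb : ∀ U x, α (√(‖U‖ ^ 2 + ‖x‖ ^ 2)) ≤ J U x)
    (hJ_ub : ∀ U x, J U x ≤ β (√(‖U‖ ^ 2 + ‖x‖ ^ 2))) (hJ_nonneg : ∀ U x, 0 ≤ J U x)
    (htw : ∀ U x, J (Ψtw U x) (s U x) - J U x ≤ -ℓ U x)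
    (hγ_cont : Continuous fun p : E × F => γ p.1 p.2) (hγ_nonneg : ∀ U x, 0 ≤ γ U x)
    (hγ_zero : ∀ U x, γ U x = 0 → ∀ U', J U x ≤ J U' x)
    (ho : ∀ U x, J (Ψo U x) x - J U x ≤ -γ U x) {Φ : ℕ → E → F → E}
    (hΦ0 : ∀ U x, Φ 0 U x = Ψtw U x) (hΦs : ∀ i U x, Φ (i + 1) U x = Ψo (Φ i U x) (s U x)) :
    (∀ ε > (0 : ℝ), ∃ δ > (0 : ℝ), ∀ (U : ℕ → E) (X : ℕ → F) (iT : ℕ → ℕ), (∀ k, 1 ≤ iT k) →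
      (∀ k, U (k + 1) = Φ (iT k) (U k) (X k)) → (∀ k, X (k + 1) = s (U k) (X k)) →
      √(‖U 0‖ ^ 2 + ‖X 0‖ ^ 2) ≤ δ → ∀ k, √(‖U k‖ ^ 2 + ‖X k‖ ^ 2) ≤ ε) ∧
    (∀ (U : ℕ → E) (X : ℕ → F) (iT : ℕ → ℕ), (∀ k, 1 ≤ iT k) →
      (∀ k, U (k + 1) = Φ (iT k) (U k) (X k)) → (∀ k, X (k + 1) = s (U k) (X k)) →
      Tendsto (fun k => (U k, X k)) atTop (𝓝 (0, 0))) := by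
  have := properSpace_withLp_prod 2 E F
  let V : WithLp 2 (E × F) → ℝ := fun z => J z.fst z.snd
  have hαV : ∀ z, α ‖z‖ ≤ V z := fun z => WithLp.prod_norm_eq_of_L2 z ▸ hJ_lb z.fst z.snd
  have hVβ : ∀ z, V z ≤ β ‖z‖ := fun z => WithLp.prod_norm_eq_of_L2 z ▸ hJ_ub z.fst z.snd
  have hV_nonneg : ∀ z, 0 ≤ V z := fun z => hJ_nonneg z.fst z.snd
  have hV : Tendsto V (𝓝 0) (𝓝 0) := tendsto_zero_of_le_comp_norm hβ hV_nonneg hVβ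
  have hopt : ∀ z : WithLp 2 (E × F), γ z.fst z.snd = 0 → z.snd = 0 → z = 0 := fun z hγz hz =>
    eq_zero_of_comp_norm_le hα_pos hαV <| calc
      V z ≤ J 0 z.snd := hγ_zero _ _ hγz 0
      _ = V 0 := by rw [hz]; rfl
      _ = 0 := eq_of_tendsto_nhds hV
  refine ⟨fun ε hε => ?_, fun U X iT hiT hU hX => ?_⟩
  · obtain ⟨δ, hδ, hstable⟩ := exists_forall_norm_le_of_antitone hα_mono hα_pos hαV hV hε
    simp only [WithLp.prod_norm_eq_of_L2] at hstable
    exact ⟨δ, hδ, fun U X iT hiT hU hX => hstable (fun k => WithLp.toLp 2 (U k, X k)) <|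
      (isTwoStageDescent_closedLoop htw hγ_nonneg ho hΦ0 hΦs hiT hU hX).antitone
        (fun z => hℓ_nonneg z.fst z.snd) (fun z => hγ_nonneg z.fst z.snd)⟩
  · have hlim := (isTwoStageDescent_closedLoop htw hγ_nonneg ho hΦ0 hΦs hiT hU hX).tendsto_zero
      (π := WithLp.snd) (y₀ := 0) (fun _ => rfl) (by fun_prop) hα_mono hα_pos hα_top hαV
      hV_nonneg hV (hℓ_cont.comp (WithLp.prod_continuous_ofLp 2 E F))
      (fun z => hℓ_nonneg z.fst z.snd) (fun z => hℓ_zero z.fst z.snd)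
      (hγ_cont.comp (WithLp.prod_continuous_ofLp 2 E F))
      (fun z => hγ_nonneg z.fst z.snd) hopt
    exact ((WithLp.prod_continuous_ofLp 2 E F).tendsto 0).comp hlim

/-- Global asymptotic stability of the origin for the coupled
system–optimizer dynamics of anytime real-time MPC (Theorem 1 of the paper).
`Φ i U x` is the `i`-fold optimizer map started from the temporal warm start,
`proj0` projects a stacked input sequence onto its first `m` coordinates, and the
Euclidean norm of a pair `(U,x)` is `√(‖U‖² + ‖x‖²)`. -/
theorem stmt_0 (n m N : ℕ) (hn : 0 < n) (hm : 0 < m) (hN : 0 < N)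
    (f : EuclideanSpace ℝ (Fin n) → EuclideanSpace ℝ (Fin m) → EuclideanSpace ℝ (Fin n))
    (l : EuclideanSpace ℝ (Fin n) → EuclideanSpace ℝ (Fin m) → ℝ)
    (J : EuclideanSpace ℝ (Fin (N * m)) → EuclideanSpace ℝ (Fin n) → ℝ)
    (Jstar : EuclideanSpace ℝ (Fin n) → ℝ)
    (Ψtw Ψo : EuclideanSpace ℝ (Fin (N * m)) → EuclideanSpace ℝ (Fin n) →
      EuclideanSpace ℝ (Fin (N * m)))
    (γ : EuclideanSpace ℝ (Fin (N * m)) → EuclideanSpace ℝ (Fin n) → ℝ)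
    (proj0 : EuclideanSpace ℝ (Fin (N * m)) → EuclideanSpace ℝ (Fin m))
    (hproj0 : ∀ U i, proj0 U i = U (Fin.castLE (Nat.le_mul_of_pos_left m hN) i))
    -- (a) the stage cost is continuous, nonnegative and positive definite
    (hl_cont : Continuous fun p : EuclideanSpace ℝ (Fin n) × EuclideanSpace ℝ (Fin m) =>
      l p.1 p.2)
    (hl_nonneg : ∀ x u, 0 ≤ l x u)
    (hl_pd : ∀ x u, l x u = 0 ↔ x = 0 ∧ u = 0)
    -- (b) class-K∞ upper and lower bounds on the cost
    (α β : ℝ → ℝ)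
    (hα_cont : ContinuousOn α (Set.Ici 0)) (hα_mono : StrictMonoOn α (Set.Ici 0))
    (hα0 : α 0 = 0) (hα_top : Tendsto α atTop atTop)
    (hβ_cont : ContinuousOn β (Set.Ici 0)) (hβ_mono : StrictMonoOn β (Set.Ici 0))
    (hβ0 : β 0 = 0) (hβ_top : Tendsto β atTop atTop)
    (hJ_lb : ∀ U x, α (Real.sqrt (‖U‖ ^ 2 + ‖x‖ ^ 2)) ≤ J U x)
    (hJ_ub : ∀ U x, J U x ≤ β (Real.sqrt (‖U‖ ^ 2 + ‖x‖ ^ 2)))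
    (hJ_nonneg : ∀ U x, 0 ≤ J U x)
    -- value function
    (hJstar : ∀ x, IsGLB (Set.range fun U => J U x) (Jstar x))
    -- (c) decrease of the temporal warm start
    (htw : ∀ U x, J (Ψtw U x) (f x (proj0 U)) - J U x ≤ -l x (proj0 U))
    -- (d) decrease of the optimization update operator
    (hγ_cont : Continuous fun p : EuclideanSpace ℝ (Fin (N * m)) × EuclideanSpace ℝ (Fin n) =>
      γ p.1 p.2)
    (hγ_nonneg : ∀ U x, 0 ≤ γ U x)
    (hγ_zero : ∀ U x, γ U x = 0 ↔ J U x = Jstar x)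
    (ho : ∀ U x, J (Ψo U x) x - J U x ≤ -γ U x)
    -- the real-time iteration maps Φ⁰ = Ψtw, Φ^{i+1} = Ψo(Φ^i, f(x, proj0U))
    (Φ : ℕ → EuclideanSpace ℝ (Fin (N * m)) → EuclideanSpace ℝ (Fin n) →
      EuclideanSpace ℝ (Fin (N * m)))
    (hΦ0 : ∀ U x, Φ 0 U x = Ψtw U x)
    (hΦs : ∀ i U x, Φ (i + 1) U x = Ψo (Φ i U x) (f x (proj0 U))) :
    -- stability
    (∀ ε > (0 : ℝ), ∃ δ > (0 : ℝ),
      ∀ (U : ℕ → EuclideanSpace ℝ (Fin (N * m))) (X : ℕ → EuclideanSpace ℝ (Fin n))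
        (iT : ℕ → ℕ), (∀ k, 1 ≤ iT k) →
        (∀ k, U (k + 1) = Φ (iT k) (U k) (X k)) →
        (∀ k, X (k + 1) = f (X k) (proj0 (U k))) →
        Real.sqrt (‖U 0‖ ^ 2 + ‖X 0‖ ^ 2) ≤ δ →
        ∀ k, Real.sqrt (‖U k‖ ^ 2 + ‖X k‖ ^ 2) ≤ ε) ∧
    -- global attractivity
    (∀ (U : ℕ → EuclideanSpace ℝ (Fin (N * m))) (X : ℕ → EuclideanSpace ℝ (Fin n))
      (iT : ℕ → ℕ), (∀ k, 1 ≤ iT k) →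
      (∀ k, U (k + 1) = Φ (iT k) (U k) (X k)) →
      (∀ k, X (k + 1) = f (X k) (proj0 (U k))) →
      Tendsto (fun k => (U k, X k)) atTop (𝓝 (0, 0))) := by
  exact stmt_0_general (s := fun U x => f x (proj0 U)) (ℓ := fun U x => l x (proj0 U))
    (hl_cont.comp (continuous_snd.prodMk
      ((continuous_of_forall_apply_eq hproj0).comp continuous_fst)))
    (fun _ _ => hl_nonneg _ _) (fun U x hl => ((hl_pd _ _).1 hl).1)
    hα_mono.monotoneOn (fun r hr => hα0 ▸ hα_mono Set.self_mem_Ici hr.le hr) hα_top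
    (by simpa only [hβ0] using (hβ_cont 0 Set.self_mem_Ici).tendsto)
    hJ_lb hJ_ub hJ_nonneg htw hγ_cont hγ_nonneg
    (fun U x hγ U' => ((hγ_zero U x).1 hγ).trans_le ((hJstar x).1 ⟨U', rfl⟩)) ho hΦ0 hΦs
end

section
/- Consider the anytime real-time MPC dynamics modified by an arbitrary learning-based warm start with min-selection: at each step k, let ξ_k = f(x(k),Π₀U(k)), let W(k) ∈ ℝ^{Nm} be any vector satisfying J_N(W(k), ξ_k) ≤ J_N(Ψ_tw(U(k),x(k)), ξ_k), and set U(k+1) = Ψ_o^{i_T(k)}(W(k), ξ_k) (i.e. Ψ_o iterated i_T(k) ≥ 1 times with second argument ξ_k), x(k+1) = ξ_k. Assume: (a) the stage cost l : ℝⁿ×ℝᵐ → ℝ≥0 is continuous and positive definite (l(x,u) = 0 iff (x,u) = (0,0)); (b) there exist class-K∞ functions α̲, ᾱ with α̲(‖(U,x)‖) ≤ J_N(U,x) ≤ ᾱ(‖(U,x)‖) for all (U,x); (c) J_N(Ψ_tw(U,x), f(x,Π₀U)) − J_N(U,x) ≤ −l(x,Π₀U) for all (U,x); (d) there is a continuous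 γ : ℝ^{Nm}×ℝⁿ → ℝ≥0 with γ(U,x) = 0 iff J_N(U,x) = J_N^*(x), such that J_N(Ψ_o(U,x),x) − J_N(U,x) ≤ −γ(U,x) for all (U,x). Then the origin (U,x) = (0,0) is globally asymptotically stable for this modified closed loop: for every ε > 0 there is δ > 0 such that ‖(U(0),x(0))‖ ≤ δ implies ‖(U(k),x(k))‖ ≤ ε for all k, and every closed-loop trajectory satisfies (U(k),x(k)) → (0,0). In particular, stability holds for every choice of the spatial warm start operator. -/
open Filter Topology

/-!
The optimal-control cost `J` is a Lyapunov function for the closed loop. Writing `ξ k = X (k + 1)`,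
min-selection and assumptions (c), (d) give the two-stage decrease

  `J (W k, ξ k) ≤ J (U k, X k) - l (X k, Π₀ (U k))`,
  `J (U (k + 1), ξ k) ≤ J (W k, ξ k) - γ (W k, ξ k)`.

Monotonicity of the cost yields stability. For attractivity, both decrements tend to zero; since the
trajectory stays in a bounded sublevel set, the first one forces `X k → 0`, and then the second one
forces the warm starts `W k → 0`. Hence `J (W k, ξ k) → 0`, which dominates the cost of the next
state, so the cost and therefore the state tend to zero.
-/

theorem tendsto_zero_of_succ_le_sub {a b : ℕ → ℝ} (ha : BddBelow (Set.range a))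
    (hb : ∀ k, 0 ≤ b k) (hab : ∀ k, a (k + 1) ≤ a k - b k) : Tendsto b atTop (𝓝 0) := by
  have ha_anti : Antitone a := antitone_nat_of_succ_le fun k ↦ by linarith [hab k, hb k]
  have ha_lim := tendsto_atTop_ciInf ha_anti ha
  have hdiff : Tendsto (fun k ↦ a k - a (k + 1)) atTop (𝓝 0) := by
    simpa using ha_lim.sub ((tendsto_add_atTop_iff_nat 1).2 ha_lim)
  exact squeeze_zero hb (fun k ↦ by linarith [hab k]) hdiff

theorem antitone_of_two_stage_decrease {a b σ γ : ℕ → ℝ} (hσ : ∀ k, 0 ≤ σ k) (hγ : ∀ k, 0 ≤ γ k)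
    (hab : ∀ k, b k ≤ a k - σ k) (hba : ∀ k, a (k + 1) ≤ b k - γ k) : Antitone a :=
  antitone_nat_of_succ_le fun k ↦ by linarith [hab k, hba k, hσ k, hγ k]

theorem tendsto_zero_decrements_of_two_stage_decrease {a b σ γ : ℕ → ℝ}
    (ha : BddBelow (Set.range a)) (hσ : ∀ k, 0 ≤ σ k) (hγ : ∀ k, 0 ≤ γ k)
    (hab : ∀ k, b k ≤ a k - σ k) (hba : ∀ k, a (k + 1) ≤ b k - γ k) :
    Tendsto σ atTop (𝓝 0) ∧ Tendsto γ atTop (𝓝 0) :=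
  ⟨tendsto_zero_of_succ_le_sub ha hσ fun k ↦ by linarith [hab k, hba k, hγ k],
    tendsto_zero_of_succ_le_sub ha hγ fun k ↦ by linarith [hab k, hba k, hσ k]⟩

theorem tendsto_of_mem_isCompact_of_tendsto_comp {ι A B M : Type*} [TopologicalSpace A]
    [TopologicalSpace B] [TopologicalSpace M] [T2Space M] {𝓕 : Filter ι} {z : ι → A} {K : Set A}
    (hK : IsCompact K) (hzK : ∀ᶠ i in 𝓕, z i ∈ K) {g : A → M} {h : A → B} (hg : Continuous g)
    (hh : Continuous h) {c : M} {y : B} (hgz : Tendsto (fun i ↦ g (z i)) 𝓕 (𝓝 c))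
    (hgh : ∀ p ∈ K, g p = c → h p = y) : Tendsto (fun i ↦ h (z i)) 𝓕 (𝓝 y) := by
  refine (tendsto_iff_ultrafilter _ _ _).2 fun 𝓤 h𝓤 ↦ ?_
  obtain ⟨p, hpK, hp⟩ := hK.ultrafilter_le_nhds (𝓤.map z) (le_principal_iff.2 (h𝓤 hzK))
  have hgp : g p = c := tendsto_nhds_unique ((hg.tendsto p).comp hp) (hgz.mono_left h𝓤)
  exact hgh p hpK hgp ▸ (hh.tendsto p).comp hp

theorem eq_zero_iff_of_comap_nhds_zero {A M : Type*} [TopologicalSpace A] [T1Space A] [Zero A]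
    [TopologicalSpace M] [T1Space M] [Zero M] {V : A → M} (hV : comap V (𝓝 0) = 𝓝 0) {p : A} :
    V p = 0 ↔ p = 0 := by
  rw [← pure_le_nhds_iff, ← map_pure, map_le_iff_le_comap, hV, pure_le_nhds_iff]

theorem continuous_of_coord_eq_coord {ι κ : Type*} {π : EuclideanSpace ℝ ι → EuclideanSpace ℝ κ}
    {e : κ → ι} (hπ : ∀ U i, π U i = U (e i)) : Continuous π :=
  (PiLp.continuous_toLp 2 _).comp (continuous_pi fun i ↦ by simp only [hπ]; fun_prop)

section JointNorm

variable {E F : Type*} [SeminormedAddCommGroup E] [SeminormedAddCommGroup F]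

theorem norm_le_sqrt_norm_sq_add_norm_sq (p : E × F) : ‖p‖ ≤ √(‖p.1‖ ^ 2 + ‖p.2‖ ^ 2) :=
  max_le (Real.le_sqrt_of_sq_le (by simp)) (Real.le_sqrt_of_sq_le (by simp))

theorem comap_sqrt_norm_sq_add_norm_sq_nhds_zero :
    comap (fun p : E × F ↦ √(‖p.1‖ ^ 2 + ‖p.2‖ ^ 2)) (𝓝 0) = 𝓝 0 := by
  apply le_antisymm
  · exact tendsto_id'.1 (squeeze_zero_norm norm_le_sqrt_norm_sq_add_norm_sq tendsto_comap)
  · have hcont : Continuous fun p : E × F ↦ √(‖p.1‖ ^ 2 + ‖p.2‖ ^ 2) := by fun_prop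
    exact (hcont.tendsto' 0 0 (by simp)).le_comap

end JointNorm

section Lyapunov

variable {Z : Type*} {ρ V : Z → ℝ}

theorem comap_nhds_zero_eq_of_comparison_bounds {α β : ℝ → ℝ}
    (hα : StrictMonoOn α (Set.Ici 0)) (hα0 : α 0 = 0) (hβ : Tendsto β (𝓝[≥] 0) (𝓝 0))
    (hρ : ∀ z, 0 ≤ ρ z) (hlb : ∀ z, α (ρ z) ≤ V z) (hub : ∀ z, V z ≤ β (ρ z)) :
    comap V (𝓝 0) = comap ρ (𝓝 0) := by
  have hα_pos {s : ℝ} (hs : 0 < s) : 0 < α s :=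
    hα0 ▸ hα Set.self_mem_Ici hs.le hs
  have hα_nonneg (z : Z) : 0 ≤ α (ρ z) :=
    hα0 ▸ hα.monotoneOn Set.self_mem_Ici (hρ z) (hρ z)
  apply le_antisymm
  · refine Tendsto.le_comap (tendsto_order.2 ⟨fun s hs ↦ .of_forall fun z ↦ hs.trans_le (hρ z),
      fun s hs ↦ ?_⟩)
    filter_upwards [tendsto_comap.eventually_lt_const (hα_pos hs)] with z hz
    exact (hα.lt_iff_lt (hρ z) hs.le).1 ((hlb z).trans_lt hz)
  · have hρ_within : Tendsto ρ (comap ρ (𝓝 0)) (𝓝[≥] 0) :=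
      tendsto_nhdsWithin_iff.2 ⟨tendsto_comap, .of_forall hρ⟩
    exact (squeeze_zero (fun z ↦ (hα_nonneg z).trans (hlb z)) hub (hβ.comp hρ_within)).le_comap

theorem exists_forall_le_of_antitone_comp (hρ : ∀ z, 0 ≤ ρ z) (hV : ∀ z, 0 ≤ V z)
    (hVρ : comap V (𝓝 0) = comap ρ (𝓝 0)) {ε : ℝ} (hε : 0 < ε) :
    ∃ δ > 0, ∀ z : ℕ → Z, Antitone (fun k ↦ V (z k)) → ρ (z 0) ≤ δ → ∀ k, ρ (z k) ≤ ε := by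
  have hρ_small : ∀ᶠ z in comap V (𝓝 0), ρ z ≤ ε :=
    hVρ ▸ tendsto_comap.eventually_le_const hε
  obtain ⟨c, hc, hVc⟩ := (Metric.nhds_basis_closedBall.comap V).eventually_iff.1 hρ_small
  have hV_small : ∀ᶠ z in comap ρ (𝓝 0), V z ≤ c :=
    hVρ ▸ tendsto_comap.eventually_le_const hc
  obtain ⟨δ, hδ, hρδ⟩ := (Metric.nhds_basis_closedBall.comap ρ).eventually_iff.1 hV_small
  refine ⟨δ, hδ, fun z hz hz0 k ↦ hVc ?_⟩
  have hV0 : V (z 0) ≤ c := hρδ (by simpa [abs_of_nonneg (hρ _)] using hz0)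
  simpa [abs_of_nonneg (hV _)] using (hz k.zero_le).trans hV0

theorem tendsto_zero_of_two_stage_decrease {E F : Type*} [TopologicalSpace E] [Zero E]
    [TopologicalSpace F] [Zero F] [T2Space F] {V σ γ : E × F → ℝ}
    (hV_nonneg : ∀ p, 0 ≤ V p) (hV_coercive : Tendsto V (cocompact (E × F)) atTop)
    (hV_zero : comap V (𝓝 0) = 𝓝 0)
    (hσ_cont : Continuous σ) (hσ_nonneg : ∀ p, 0 ≤ σ p) (hσ_zero : ∀ p, σ p = 0 → p.2 = 0)
    (hγ_cont : Continuous γ) (hγ_nonneg : ∀ p, 0 ≤ γ p) (hγ_zero : ∀ u, γ (u, 0) = 0 → u = 0)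
    {U W : ℕ → E} {X : ℕ → F}
    (hwarm : ∀ k, V (W k, X (k + 1)) ≤ V (U k, X k) - σ (U k, X k))
    (hupdate : ∀ k, V (U (k + 1), X (k + 1)) ≤ V (W k, X (k + 1)) - γ (W k, X (k + 1))) :
    Tendsto (fun k ↦ (U k, X k)) atTop (𝓝 0) := by
  have hV_bdd : BddBelow (Set.range fun k ↦ V (U k, X k)) :=
    ⟨0, Set.forall_mem_range.2 fun k ↦ hV_nonneg _⟩
  have hV_anti : Antitone fun k ↦ V (U k, X k) :=
    antitone_of_two_stage_decrease (fun _ ↦ hσ_nonneg _) (fun _ ↦ hγ_nonneg _) hwarm hupdate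
  obtain ⟨hσ_lim, hγ_lim⟩ := tendsto_zero_decrements_of_two_stage_decrease hV_bdd
    (fun _ ↦ hσ_nonneg _) (fun _ ↦ hγ_nonneg _) hwarm hupdate
  obtain ⟨K, hK, hKV⟩ := mem_cocompact'.1 (hV_coercive.eventually_gt_atTop (V (U 0, X 0)))
  have hV_le (k : ℕ) : V (U k, X k) ≤ V (U 0, X 0) := hV_anti k.zero_le
  have hz_mem (k : ℕ) : (U k, X k) ∈ K := hKV (hV_le k).not_gt
  have hw_le (k : ℕ) : V (W k, X (k + 1)) ≤ V (U 0, X 0) := by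
    linarith [hwarm k, hσ_nonneg (U k, X k), hV_le k]
  have hw_mem (k : ℕ) : (W k, X (k + 1)) ∈ K := hKV (hw_le k).not_gt
  have hX_lim : Tendsto X atTop (𝓝 0) :=
    tendsto_of_mem_isCompact_of_tendsto_comp hK (.of_forall hz_mem) hσ_cont continuous_snd hσ_lim
      fun p _ ↦ hσ_zero p
  have hw_lim : Tendsto (fun k ↦ (W k, X (k + 1))) atTop (𝓝 0) := by
    refine tendsto_of_mem_isCompact_of_tendsto_comp hK (.of_forall hw_mem)
      (hγ_cont.prodMk continuous_snd) continuous_id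
      (hγ_lim.prodMk_nhds ((tendsto_add_atTop_iff_nat 1).2 hX_lim)) ?_
    rintro ⟨w, x⟩ - hwx
    obtain ⟨hγw, rfl⟩ := Prod.mk.inj hwx
    exact Prod.ext (hγ_zero w hγw) rfl
  have hVw_lim : Tendsto (fun k ↦ V (W k, X (k + 1))) atTop (𝓝 0) :=
    (tendsto_comap.mono_left hV_zero.ge).comp hw_lim
  have hVz_lim : Tendsto (fun k ↦ V (U k, X k)) atTop (𝓝 0) :=
    (tendsto_add_atTop_iff_nat 1).1 <| squeeze_zero (fun k ↦ hV_nonneg _)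
      (fun k ↦ by linarith [hupdate k, hγ_nonneg (W k, X (k + 1))]) hVw_lim
  exact hV_zero ▸ tendsto_comap_iff.2 hVz_lim

end Lyapunov

/-- Trajectories of the anytime MPC closed loop under min-selection: `U`, `X` are the input
sequences and system states, `W` the warm starts and `iT` the numbers of optimizer iterations.
The input sequences live in an arbitrary type `E`, and `π` replaces the projection onto the first
input. -/
structure IsMinSelectionTrajectory {E F G : Type*} (f : F → G → F) (J : E → F → ℝ)
    (Ψtw Ψo : E → F → E) (π : E → G) (U W : ℕ → E) (X : ℕ → F) (iT : ℕ → ℕ) : Prop where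
  one_le_iterations : ∀ k, 1 ≤ iT k
  cost_warmStart_le : ∀ k, J (W k) (f (X k) (π (U k))) ≤ J (Ψtw (U k) (X k)) (f (X k) (π (U k)))
  input_succ : ∀ k, U (k + 1) = (fun V ↦ Ψo V (f (X k) (π (U k))))^[iT k] (W k)
  state_succ : ∀ k, X (k + 1) = f (X k) (π (U k))

namespace IsMinSelectionTrajectory

variable {E F G : Type*} {f : F → G → F} {l : F → G → ℝ} {J γ : E → F → ℝ}
  {Ψtw Ψo : E → F → E} {π : E → G} {U W : ℕ → E} {X : ℕ → F} {iT : ℕ → ℕ}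

theorem cost_warmStart_le_sub (h : IsMinSelectionTrajectory f J Ψtw Ψo π U W X iT)
    (htw : ∀ U x, J (Ψtw U x) (f x (π U)) - J U x ≤ -l x (π U)) (k : ℕ) :
    J (W k) (X (k + 1)) ≤ J (U k) (X k) - l (X k) (π (U k)) := by
  rw [h.state_succ]
  linarith [h.cost_warmStart_le k, htw (U k) (X k)]

theorem cost_succ_le_sub (h : IsMinSelectionTrajectory f J Ψtw Ψo π U W X iT)
    (hγ_nonneg : ∀ U x, 0 ≤ γ U x) (ho : ∀ U x, J (Ψo U x) x - J U x ≤ -γ U x) (k : ℕ) :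
    J (U (k + 1)) (X (k + 1)) ≤ J (W k) (X (k + 1)) - γ (W k) (X (k + 1)) := by
  obtain ⟨j, hj⟩ := Nat.exists_eq_add_of_le' (h.one_le_iterations k)
  rw [h.input_succ, ← h.state_succ, hj, Function.iterate_succ_apply]
  set ξ := X (k + 1)
  have hiterate : J ((fun V ↦ Ψo V ξ)^[j] (Ψo (W k) ξ)) ξ ≤ J (Ψo (W k) ξ) ξ :=
    Function.Iterate.rec (fun V ↦ J V ξ ≤ J (Ψo (W k) ξ) ξ) le_rfl
      (fun V hV ↦ by linarith [ho V ξ, hγ_nonneg V ξ]) j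
  linarith [ho (W k) ξ]

theorem antitone_cost (h : IsMinSelectionTrajectory f J Ψtw Ψo π U W X iT)
    (hl_nonneg : ∀ x u, 0 ≤ l x u)
    (htw : ∀ U x, J (Ψtw U x) (f x (π U)) - J U x ≤ -l x (π U))
    (hγ_nonneg : ∀ U x, 0 ≤ γ U x) (ho : ∀ U x, J (Ψo U x) x - J U x ≤ -γ U x) :
    Antitone fun k ↦ J (U k) (X k) :=
  antitone_of_two_stage_decrease (fun _ ↦ hl_nonneg _ _) (fun _ ↦ hγ_nonneg _ _)
    (h.cost_warmStart_le_sub htw) (h.cost_succ_le_sub hγ_nonneg ho)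

end IsMinSelectionTrajectory

theorem stmt_1_general {E F G : Type*} [NormedAddCommGroup E] [ProperSpace E]
    [NormedAddCommGroup F] [ProperSpace F] [TopologicalSpace G]
    {f : F → G → F} {l : F → G → ℝ} {J γ : E → F → ℝ} {Ψtw Ψo : E → F → E} {π : E → G}
    (hπ : Continuous π)
    (hl_cont : Continuous fun p : F × G ↦ l p.1 p.2) (hl_nonneg : ∀ x u, 0 ≤ l x u)
    (hl_zero : ∀ x u, l x u = 0 → x = 0)
    {α β : ℝ → ℝ} (hα : StrictMonoOn α (Set.Ici 0)) (hα0 : α 0 = 0)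
    (hα_top : Tendsto α atTop atTop) (hβ : Tendsto β (𝓝[≥] 0) (𝓝 0))
    (hJ_lb : ∀ U x, α √(‖U‖ ^ 2 + ‖x‖ ^ 2) ≤ J U x)
    (hJ_ub : ∀ U x, J U x ≤ β √(‖U‖ ^ 2 + ‖x‖ ^ 2))
    (htw : ∀ U x, J (Ψtw U x) (f x (π U)) - J U x ≤ -l x (π U))
    (hγ_cont : Continuous fun p : E × F ↦ γ p.1 p.2) (hγ_nonneg : ∀ U x, 0 ≤ γ U x)
    (hγ_zero : ∀ U x, γ U x = 0 → ∀ V, J U x ≤ J V x)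
    (ho : ∀ U x, J (Ψo U x) x - J U x ≤ -γ U x) :
    (∀ ε > (0 : ℝ), ∃ δ > (0 : ℝ), ∀ U W X iT,
      IsMinSelectionTrajectory f J Ψtw Ψo π U W X iT → √(‖U 0‖ ^ 2 + ‖X 0‖ ^ 2) ≤ δ →
        ∀ k, √(‖U k‖ ^ 2 + ‖X k‖ ^ 2) ≤ ε) ∧
    ∀ U W X iT, IsMinSelectionTrajectory f J Ψtw Ψo π U W X iT →
      Tendsto (fun k ↦ (U k, X k)) atTop (𝓝 (0, 0)) := by
  let V : E × F → ℝ := fun p ↦ J p.1 p.2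
  let ρ : E × F → ℝ := fun p ↦ √(‖p.1‖ ^ 2 + ‖p.2‖ ^ 2)
  have hρ (p : E × F) : 0 ≤ ρ p := Real.sqrt_nonneg _
  have hV_nonneg (p : E × F) : 0 ≤ V p :=
    (hα0 ▸ hα.monotoneOn Set.self_mem_Ici (hρ p) (hρ p)).trans (hJ_lb p.1 p.2)
  have hVρ : comap V (𝓝 0) = comap ρ (𝓝 0) :=
    comap_nhds_zero_eq_of_comparison_bounds hα hα0 hβ hρ (fun p ↦ hJ_lb p.1 p.2)
      fun p ↦ hJ_ub p.1 p.2
  have hV_zero : comap V (𝓝 0) = 𝓝 0 := hVρ.trans comap_sqrt_norm_sq_add_norm_sq_nhds_zero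
  have hV_coercive : Tendsto V (cocompact (E × F)) atTop :=
    tendsto_atTop_mono (fun p ↦ hJ_lb p.1 p.2) <| hα_top.comp <|
      tendsto_atTop_mono norm_le_sqrt_norm_sq_add_norm_sq tendsto_norm_cocompact_atTop
  have hV_zero_iff (p : E × F) : V p = 0 ↔ p = 0 := eq_zero_iff_of_comap_nhds_zero hV_zero
  have hγ_zero_at_origin (u : E) (hu : γ u 0 = 0) : u = 0 :=
    have hV_le : V (u, 0) ≤ V 0 := hγ_zero u 0 hu 0
    have hV_eq : V (u, 0) = 0 :=
      le_antisymm (hV_le.trans_eq ((hV_zero_iff 0).2 rfl)) (hV_nonneg _)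
    congrArg Prod.fst ((hV_zero_iff _).1 hV_eq)
  refine ⟨fun ε hε ↦ ?_, fun U W X iT h ↦ ?_⟩
  · obtain ⟨δ, hδ, hstable⟩ := exists_forall_le_of_antitone_comp hρ hV_nonneg hVρ hε
    exact ⟨δ, hδ, fun U W X iT h ↦ hstable (fun k ↦ (U k, X k))
      (h.antitone_cost hl_nonneg htw hγ_nonneg ho)⟩
  · exact tendsto_zero_of_two_stage_decrease (σ := fun p ↦ l p.2 (π p.1))
      (γ := fun p ↦ γ p.1 p.2) hV_nonneg hV_coercive hV_zero
      (hl_cont.comp (continuous_snd.prodMk (hπ.comp continuous_fst))) (fun p ↦ hl_nonneg _ _)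
      (fun p ↦ hl_zero _ _) hγ_cont (fun p ↦ hγ_nonneg _ _)
      hγ_zero_at_origin (h.cost_warmStart_le_sub htw) (h.cost_succ_le_sub hγ_nonneg ho)

/-- Global asymptotic stability of the origin for the anytime
real-time MPC dynamics with an arbitrary learning-based warm start under
min-selection: at each step any warm start `W k` whose cost at
`ξ k = f(x k, Π₀ U k)` does not exceed that of the temporal warm start may be
used, followed by `i_T k ≥ 1` optimizer iterations. Stability holds for every
choice of the spatial warm start operator. -/
theorem stmt_1 (n m N : ℕ) (hn : 0 < n) (hm : 0 < m) (hN : 0 < N)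
    (f : EuclideanSpace ℝ (Fin n) → EuclideanSpace ℝ (Fin m) → EuclideanSpace ℝ (Fin n))
    (l : EuclideanSpace ℝ (Fin n) → EuclideanSpace ℝ (Fin m) → ℝ)
    (J : EuclideanSpace ℝ (Fin (N * m)) → EuclideanSpace ℝ (Fin n) → ℝ)
    (Jstar : EuclideanSpace ℝ (Fin n) → ℝ)
    (Ψtw Ψo : EuclideanSpace ℝ (Fin (N * m)) → EuclideanSpace ℝ (Fin n) →
      EuclideanSpace ℝ (Fin (N * m)))
    (γ : EuclideanSpace ℝ (Fin (N * m)) → EuclideanSpace ℝ (Fin n) → ℝ)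
    (proj0 : EuclideanSpace ℝ (Fin (N * m)) → EuclideanSpace ℝ (Fin m))
    (hproj0 : ∀ U i, proj0 U i = U (Fin.castLE (Nat.le_mul_of_pos_left m hN) i))
    -- (a) the stage cost is continuous, nonnegative and positive definite
    (hl_cont : Continuous fun p : EuclideanSpace ℝ (Fin n) × EuclideanSpace ℝ (Fin m) =>
      l p.1 p.2)
    (hl_nonneg : ∀ x u, 0 ≤ l x u)
    (hl_pd : ∀ x u, l x u = 0 ↔ x = 0 ∧ u = 0)
    -- (b) class-K∞ upper and lower bounds on the cost
    (α β : ℝ → ℝ)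
    (hα_cont : ContinuousOn α (Set.Ici 0)) (hα_mono : StrictMonoOn α (Set.Ici 0))
    (hα0 : α 0 = 0) (hα_top : Tendsto α atTop atTop)
    (hβ_cont : ContinuousOn β (Set.Ici 0)) (hβ_mono : StrictMonoOn β (Set.Ici 0))
    (hβ0 : β 0 = 0) (hβ_top : Tendsto β atTop atTop)
    (hJ_lb : ∀ U x, α (Real.sqrt (‖U‖ ^ 2 + ‖x‖ ^ 2)) ≤ J U x)
    (hJ_ub : ∀ U x, J U x ≤ β (Real.sqrt (‖U‖ ^ 2 + ‖x‖ ^ 2)))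
    (hJ_nonneg : ∀ U x, 0 ≤ J U x)
    -- value function
    (hJstar : ∀ x, IsGLB (Set.range fun U => J U x) (Jstar x))
    -- (c) decrease of the temporal warm start
    (htw : ∀ U x, J (Ψtw U x) (f x (proj0 U)) - J U x ≤ -l x (proj0 U))
    -- (d) decrease of the optimization update operator
    (hγ_cont : Continuous fun p : EuclideanSpace ℝ (Fin (N * m)) × EuclideanSpace ℝ (Fin n) =>
      γ p.1 p.2)
    (hγ_nonneg : ∀ U x, 0 ≤ γ U x)
    (hγ_zero : ∀ U x, γ U x = 0 ↔ J U x = Jstar x)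
    (ho : ∀ U x, J (Ψo U x) x - J U x ≤ -γ U x) :
    -- stability
    (∀ ε > (0 : ℝ), ∃ δ > (0 : ℝ),
      ∀ (U W : ℕ → EuclideanSpace ℝ (Fin (N * m))) (X : ℕ → EuclideanSpace ℝ (Fin n))
        (iT : ℕ → ℕ), (∀ k, 1 ≤ iT k) →
        (∀ k, J (W k) (f (X k) (proj0 (U k))) ≤
          J (Ψtw (U k) (X k)) (f (X k) (proj0 (U k)))) →
        (∀ k, U (k + 1) = (fun V => Ψo V (f (X k) (proj0 (U k))))^[iT k] (W k)) →
        (∀ k, X (k + 1) = f (X k) (proj0 (U k))) →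
        Real.sqrt (‖U 0‖ ^ 2 + ‖X 0‖ ^ 2) ≤ δ →
        ∀ k, Real.sqrt (‖U k‖ ^ 2 + ‖X k‖ ^ 2) ≤ ε) ∧
    -- global attractivity
    (∀ (U W : ℕ → EuclideanSpace ℝ (Fin (N * m))) (X : ℕ → EuclideanSpace ℝ (Fin n))
      (iT : ℕ → ℕ), (∀ k, 1 ≤ iT k) →
      (∀ k, J (W k) (f (X k) (proj0 (U k))) ≤
        J (Ψtw (U k) (X k)) (f (X k) (proj0 (U k)))) →
      (∀ k, U (k + 1) = (fun V => Ψo V (f (X k) (proj0 (U k))))^[iT k] (W k)) →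
      (∀ k, X (k + 1) = f (X k) (proj0 (U k))) →
      Tendsto (fun k => (U k, X k)) atTop (𝓝 (0, 0))) := by
  obtain ⟨hstable, hattractive⟩ := stmt_1_general (f := f) (Ψtw := Ψtw) (Ψo := Ψo)
    (continuous_of_coord_eq_coord hproj0) hl_cont hl_nonneg (fun x u h ↦ ((hl_pd x u).1 h).1)
    hα_mono hα0 hα_top (by simpa only [ContinuousWithinAt, hβ0] using hβ_cont 0 Set.self_mem_Ici)
    hJ_lb hJ_ub htw hγ_cont hγ_nonneg
    (fun U x h V ↦ ((hγ_zero U x).1 h).trans_le ((hJstar x).1 ⟨V, rfl⟩)) ho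
  exact ⟨fun ε hε ↦ (hstable ε hε).imp fun δ ⟨hδ, h⟩ ↦
    ⟨hδ, fun U W X iT hiT hW hU hX ↦ h U W X iT ⟨hiT, hW, hU, hX⟩⟩,
    fun U W X iT hiT hW hU hX ↦ hattractive U W X iT ⟨hiT, hW, hU, hX⟩⟩
end

section
/- Consider the real-time MPC closed loop with convex-hull-based learning. Assume: (a) J_N : ℝ^{Nm}×ℝⁿ → ℝ is convex jointly in (U,x); (b) there is a continuous γ : ℝ^{Nm}×ℝⁿ → ℝ≥0 with γ(U,x) = 0 if and only if J_N(U,x) = J_N^*(x), such that J_N(Ψ_o(U,x),x) − J_N(U,x) ≤ −γ(U,x) for all (U,x); (c) the sequences (U(k),x(k)), the warm starts W(k), and the points ξ_k all remain in a fixed compact set. Then for every ω-limit point x of the sequence (ξ_k) such that x ∈ interior(conv D_x(k₀)) for some k₀ ∈ ℕ, one has lim_{k→∞} J_N(Ψ_sw(x, D(k)), x) = J_N^*(x); i.e. the spatial warm start asymptotically attains the value function at x. -/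
open Filter Topology

/-!
Adding data enlarges `conv D`, so the minimal hull costs `a k` form an antitone sequence of convex
functions, bounded below at `x` by the value function. Antitonicity gives a locally uniform upper
bound, and convexity at the midpoint `x` of `y` and `x + x - y` turns it into a lower one: hence
`a k y` tends to a single limit `l` as `k → ∞` and `y → x` jointly. Along the loop,
`a (k + 1) (ξ k) + γ (W k) (ξ k) ≤ J (W k) (ξ k) ≤ a k (ξ k)`. At a cluster point `(V, x)` of
`(W k, ξ k)` this becomes `l + γ V x ≤ J V x ≤ l`, so `γ V x = 0` and `l = J V x` is the optimal
cost at `x`.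
-/

theorem exists_ultrafilter_tendsto_prodMk {ι E F : Type*} [TopologicalSpace E] [TopologicalSpace F]
    [T2Space F] {L : Filter ι} {u : ι → E} {v : ι → F} {K : Set (E × F)} (hK : IsCompact K)
    (huv : ∀ i, (u i, v i) ∈ K) {y : F} (hy : MapClusterPt y L v) :
    ∃ (G : Ultrafilter ι) (z : E), ↑G ≤ L ∧ Tendsto (fun i => (u i, v i)) G (𝓝 (z, y)) := by
  obtain ⟨G, hGL, hv⟩ := mapClusterPt_iff_ultrafilter.mp hy
  obtain ⟨⟨z, y'⟩, -, huv_lim⟩ := hK.ultrafilter_le_nhds' (G.map fun i => (u i, v i))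
    (mem_map.mpr (univ_mem' huv))
  obtain rfl : y' = y := tendsto_nhds_unique ((continuous_snd.tendsto _).comp huv_lim) hv
  exact ⟨G, z, hGL, huv_lim⟩

theorem tendsto_uncurry_of_antitoneOn_of_convexOn {ι F : Type*} [Preorder ι] [AddCommGroup F]
    [Module ℝ F] [TopologicalSpace F] [IsTopologicalAddGroup F] {a : ι → F → ℝ} {s : Set F}
    {x : F} {k₀ : ι} (hs : s ∈ 𝓝 x) (hconv : ∀ k ≥ k₀, ConvexOn ℝ s (a k))
    (hanti : ∀ y ∈ s, AntitoneOn (a · y) (Set.Ici k₀))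
    (husc : ∀ k ≥ k₀, UpperSemicontinuousAt (a k) x)
    (hbdd : BddBelow ((a · x) '' Set.Ici k₀)) :
    Tendsto (Function.uncurry a) (atTop ×ˢ 𝓝 x) (𝓝 (sInf ((a · x) '' Set.Ici k₀))) := by
  set l := sInf ((a · x) '' Set.Ici k₀)
  have hupper : ∀ c > l, ∀ᶠ q : ι × F in atTop ×ˢ 𝓝 x, a q.1 q.2 < c := by
    intro c hc
    obtain ⟨_, ⟨k₁, hk₁, rfl⟩, hk₁c⟩ := exists_lt_of_csInf_lt (Set.nonempty_Ici.image _) hc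
    filter_upwards [(eventually_ge_atTop k₁).prod_mk
      (Eventually.and hs (husc k₁ hk₁ c hk₁c))] with ⟨k, y⟩ ⟨hk, hy, hyc⟩
    exact (hanti y hy hk₁ (hk₁.trans hk) hk).trans_lt hyc
  have hreflect : Tendsto (fun y => x + x - y) (𝓝 x) (𝓝 x) := by
    simpa using (tendsto_const_nhds (x := x + x)).sub (tendsto_id (x := 𝓝 x))
  refine tendsto_order.mpr ⟨fun b hb => ?_, hupper⟩
  filter_upwards [(tendsto_id.prodMap hreflect).eventually (hupper (2 * l - b) (by linarith)),
    (eventually_ge_atTop k₀).prod_mk (Eventually.and hs (hreflect hs))]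
    with ⟨k, y⟩ hreflect_lt ⟨hk, hy, hy'⟩
  have hmid := (hconv k hk).2 hy hy' (by norm_num : (0 : ℝ) ≤ 1 / 2) one_half_pos.le (by norm_num)
  rw [show (1 / 2 : ℝ) • y + (1 / 2 : ℝ) • (x + x - y) = x by module, smul_eq_mul,
    smul_eq_mul] at hmid
  have hl : l ≤ a k x := csInf_le hbdd ⟨k, hk, rfl⟩
  simp only [Prod.map, id, Function.uncurry] at hreflect_lt ⊢
  linarith

theorem eq_zero_and_eq_of_tendsto_of_le_sub {ι Z : Type*} [TopologicalSpace Z] {G : Filter ι}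
    [G.NeBot] {z : ι → Z} {p : Z} {c δ : Z → ℝ} {u v : ι → ℝ} {l : ℝ} (hz : Tendsto z G (𝓝 p))
    (hc : ContinuousAt c p) (hδ : ContinuousAt δ p) (hδ_nonneg : 0 ≤ δ p)
    (hu : Tendsto u G (𝓝 l)) (hv : Tendsto v G (𝓝 l)) (hcu : ∀ᶠ i in G, c (z i) ≤ u i)
    (hvc : ∀ᶠ i in G, v i ≤ c (z i) - δ (z i)) : δ p = 0 ∧ c p = l := by
  have hupper : c p ≤ l := le_of_tendsto_of_tendsto (hc.tendsto.comp hz) hu hcu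
  have hlower : l ≤ c p - δ p :=
    le_of_tendsto_of_tendsto hv ((hc.tendsto.comp hz).sub (hδ.tendsto.comp hz)) hvc
  constructor <;> linarith

theorem apply_iterate_le_sub {α : Type*} {g : α → α} {c δ : α → ℝ}
    (hg : ∀ v, c (g v) ≤ c v - δ v) (hδ : ∀ v, 0 ≤ δ v) {i : ℕ} (hi : 1 ≤ i) (v : α) :
    c (g^[i] v) ≤ c v - δ v := by
  induction i, hi using Nat.le_induction with
  | base => exact hg v
  | succ i _ ih =>
    rw [Function.iterate_succ_apply']
    linarith [hg (g^[i] v), hδ (g^[i] v)]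

theorem apply_le_of_min_selection {α β : Type*} [Preorder β] {c : α → β} {s t w : α}
    (ht : c t < c s → w = t) (hs : ¬c t < c s → w = s) : c w ≤ c s := by
  by_cases h : c t < c s
  · exact (ht h).symm ▸ h.le
  · rw [hs h]

section HullWarmStart

variable {E F : Type*}

/-- The set `D_x` of states occurring in a data set `D` of triples `((U, x), c)`. -/
def dataStates (D : Set ((E × F) × ℝ)) : Set F :=
  (fun p => p.1.2) '' D

theorem convexHull_dataStates_mono [AddCommGroup F] [Module ℝ F] {D D' : Set ((E × F) × ℝ)}
    (h : D ⊆ D') : convexHull ℝ (dataStates D) ⊆ convexHull ℝ (dataStates D') :=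
  convexHull_mono (Set.image_mono h)

variable [AddCommGroup E] [Module ℝ E] [AddCommGroup F] [Module ℝ F]

/-- `sw` is a convex-hull spatial warm start for the data set `D`, with hull cost `a`: over each
`y ∈ conv D_x`, the point `((sw y, y), a y)` of `conv D` has the least last component. -/
structure IsHullWarmStart (D : Set ((E × F) × ℝ)) (sw : F → E) (a : F → ℝ) : Prop where
  mem : ∀ y ∈ convexHull ℝ (dataStates D), ((sw y, y), a y) ∈ convexHull ℝ D
  le : ∀ y ∈ convexHull ℝ (dataStates D), ∀ V c, ((V, y), c) ∈ convexHull ℝ D → a y ≤ c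

namespace IsHullWarmStart

variable {D D' : Set ((E × F) × ℝ)} {sw sw' : F → E} {a a' : F → ℝ}

theorem convexOn (h : IsHullWarmStart D sw a) : ConvexOn ℝ (convexHull ℝ (dataStates D)) a := by
  refine ⟨convex_convexHull ℝ _, fun y hy z hz s t hs ht hst => ?_⟩
  exact h.le _ (convex_convexHull ℝ _ hy hz hs ht hst) _ _
    (convex_convexHull ℝ D (h.mem y hy) (h.mem z hz) hs ht hst)

theorem le_of_subset (h : IsHullWarmStart D sw a) (h' : IsHullWarmStart D' sw' a') (hDD' : D ⊆ D')
    {y : F} (hy : y ∈ convexHull ℝ (dataStates D)) : a' y ≤ a y :=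
  h'.le y (convexHull_dataStates_mono hDD' hy) _ _ (convexHull_mono hDD' (h.mem y hy))

theorem cost_le {J : E → F → ℝ} (h : IsHullWarmStart D sw a)
    (hJ : ConvexOn ℝ Set.univ fun p : E × F => J p.1 p.2) (hD : ∀ p ∈ D, J p.1.1 p.1.2 ≤ p.2)
    {y : F} (hy : y ∈ convexHull ℝ (dataStates D)) : J (sw y) y ≤ a y :=
  have hepi : convexHull ℝ D ⊆ {p | p.1 ∈ Set.univ ∧ J p.1.1 p.1.2 ≤ p.2} :=
    convexHull_min (fun p hp => ⟨Set.mem_univ _, hD p hp⟩) hJ.convex_epigraph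
  (hepi (h.mem y hy)).2

end IsHullWarmStart

end HullWarmStart

theorem cost_le_of_mem_data {E F : Type*} {J : E → F → ℝ} {D : ℕ → Set ((E × F) × ℝ)} {U : ℕ → E}
    {ξ : ℕ → F}
    (hD : ∀ k, D (k + 1) = D k ∪ {((U (k + 1), ξ k), J (U (k + 1)) (ξ k))})
    (hD0 : ∀ p ∈ D 0, J p.1.1 p.1.2 ≤ p.2) (k : ℕ) : ∀ p ∈ D k, J p.1.1 p.1.2 ≤ p.2 := by
  induction k with
  | zero => exact hD0
  | succ k ih =>
    rw [hD k]
    rintro p (hp | rfl)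
    exacts [ih p hp, le_rfl]

section LearningLoop

variable {E F : Type*} [AddCommGroup E] [Module ℝ E] [NormedAddCommGroup F] [NormedSpace ℝ F]
  [FiniteDimensional ℝ F]

theorem exists_tendsto_hullCost {ι : Type*} [Preorder ι] {D : ι → Set ((E × F) × ℝ)}
    {Ψsw : F → ι → E} {Ja : F → ι → ℝ} (hsw : ∀ k, IsHullWarmStart (D k) (Ψsw · k) (Ja · k))
    (hD : Monotone D) {x : F} {k₀ : ι}
    (hx : x ∈ interior (convexHull ℝ (dataStates (D k₀)))) {b : ℝ} (hb : ∀ k ≥ k₀, b ≤ Ja x k) :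
    ∃ l, Tendsto (fun q : ι × F => Ja q.2 q.1) (atTop ×ˢ 𝓝 x) (𝓝 l) := by
  have hhull {k : ι} (hk : k₀ ≤ k) :
      convexHull ℝ (dataStates (D k₀)) ⊆ convexHull ℝ (dataStates (D k)) :=
    convexHull_dataStates_mono (hD hk)
  have hconv : ∀ k ≥ k₀, ConvexOn ℝ (convexHull ℝ (dataStates (D k₀))) (Ja · k) := fun k hk =>
    (hsw k).convexOn.subset (hhull hk) (convex_convexHull ℝ _)
  refine ⟨_, tendsto_uncurry_of_antitoneOn_of_convexOn (a := fun k y => Ja y k)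
    (mem_interior_iff_mem_nhds.mp hx) hconv ?_ (fun k hk => ?_) ⟨b, Set.forall_mem_image.mpr hb⟩⟩
  · exact fun y hy i hi j _ hij => (hsw i).le_of_subset (hsw j) (hD hij) (hhull hi hy)
  · exact ((hconv k hk).continuousOn_interior.continuousAt
      (isOpen_interior.mem_nhds hx)).upperSemicontinuousAt

theorem stmt_6_general [TopologicalSpace E] {J γ : E → F → ℝ} {Jstar : F → ℝ}
    (hJconv : ConvexOn ℝ Set.univ fun p : E × F => J p.1 p.2)
    (hJcont : Continuous fun p : E × F => J p.1 p.2)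
    (hJstar : ∀ y, IsGLB (Set.range fun V => J V y) (Jstar y))
    (hγ_cont : Continuous fun p : E × F => γ p.1 p.2) (hγ_nonneg : ∀ V y, 0 ≤ γ V y)
    (hγ_zero : ∀ V y, γ V y = 0 → J V y = Jstar y)
    {D : ℕ → Set ((E × F) × ℝ)} {Ψsw : F → ℕ → E} {Ja : F → ℕ → ℝ}
    (hsw : ∀ k, IsHullWarmStart (D k) (Ψsw · k) (Ja · k)) {U W : ℕ → E} {ξ : ℕ → F}
    (hW : ∀ k, ξ k ∈ convexHull ℝ (dataStates (D k)) → J (W k) (ξ k) ≤ J (Ψsw (ξ k) k) (ξ k))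
    (hU : ∀ k, J (U (k + 1)) (ξ k) ≤ J (W k) (ξ k) - γ (W k) (ξ k))
    (hD : ∀ k, D (k + 1) = D k ∪ {((U (k + 1), ξ k), J (U (k + 1)) (ξ k))})
    (hD0 : ∀ p ∈ D 0, J p.1.1 p.1.2 ≤ p.2) {K : Set (E × F)} (hK : IsCompact K)
    (hWK : ∀ k, (W k, ξ k) ∈ K) {x : F} (hx : MapClusterPt x atTop ξ) {k₀ : ℕ}
    (hk₀ : x ∈ interior (convexHull ℝ (dataStates (D k₀)))) :
    Tendsto (fun k => J (Ψsw x k) x) atTop (𝓝 (Jstar x)) := by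
  have hDmono : Monotone D := monotone_nat_of_le_succ fun k => hD k ▸ Set.subset_union_left
  have hhull {j k : ℕ} (hjk : j ≤ k) :
      convexHull ℝ (dataStates (D j)) ⊆ convexHull ℝ (dataStates (D k)) :=
    convexHull_dataStates_mono (hDmono hjk)
  have hstar_le (k : ℕ) : Jstar x ≤ J (Ψsw x k) x := (hJstar x).1 ⟨_, rfl⟩
  have hsw_le {k : ℕ} {y : F} (hy : y ∈ convexHull ℝ (dataStates (D k))) :
      J (Ψsw y k) y ≤ Ja y k :=
    (hsw k).cost_le hJconv (cost_le_of_mem_data hD hD0 k) hy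
  have hsw_le_at : ∀ k ≥ k₀, J (Ψsw x k) x ≤ Ja x k := fun k hk =>
    hsw_le (hhull hk (interior_subset hk₀))
  obtain ⟨l, hl⟩ := exists_tendsto_hullCost hsw hDmono hk₀ fun k hk =>
    (hstar_le k).trans (hsw_le_at k hk)
  have hJa : Tendsto (Ja x) atTop (𝓝 l) := hl.comp (tendsto_id.prodMk tendsto_const_nhds)
  obtain ⟨G, V, hG, hWξ⟩ := exists_ultrafilter_tendsto_prodMk hK hWK hx
  have hξ : Tendsto ξ G (𝓝 x) := (continuous_snd.tendsto _).comp hWξ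
  have hold : Tendsto (fun k => Ja (ξ k) k) G (𝓝 l) :=
    hl.comp (Tendsto.prodMk (tendsto_id'.mpr hG) hξ)
  have hnew : Tendsto (fun k => Ja (ξ k) (k + 1)) G (𝓝 l) :=
    hl.comp (((tendsto_add_atTop_nat 1).mono_left hG).prodMk hξ)
  have hξ_mem : ∀ᶠ k in G, ξ k ∈ convexHull ℝ (dataStates (D k)) := by
    filter_upwards [hG (eventually_ge_atTop k₀), hξ (mem_interior_iff_mem_nhds.mp hk₀)]
      with k hk hξk
    exact hhull hk hξk
  have hdec : ∀ᶠ k in G, Ja (ξ k) (k + 1) ≤ J (W k) (ξ k) - γ (W k) (ξ k) := by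
    filter_upwards [hξ_mem] with k hk
    have hU_mem : ((U (k + 1), ξ k), J (U (k + 1)) (ξ k)) ∈ D (k + 1) := by simp [hD k]
    exact ((hsw (k + 1)).le _ (hhull k.le_succ hk) _ _ (subset_convexHull ℝ _ hU_mem)).trans (hU k)
  obtain ⟨hγ_lim, rfl⟩ := eq_zero_and_eq_of_tendsto_of_le_sub hWξ hJcont.continuousAt
    hγ_cont.continuousAt (hγ_nonneg V x) hold hnew
    (hξ_mem.mono fun k hk => (hW k hk).trans (hsw_le hk)) hdec
  rw [← hγ_zero V x hγ_lim] at hstar_le ⊢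
  exact tendsto_of_tendsto_of_tendsto_of_le_of_le' tendsto_const_nhds hJa
    (Eventually.of_forall hstar_le) ((eventually_ge_atTop k₀).mono hsw_le_at)

end LearningLoop

/-- Convergence of the convex-hull-based learning scheme
(Theorem 3 of the paper): along the real-time MPC closed loop with data sets
`D k`, convex-hull spatial warm start `Ψsw` and min-selection of warm starts,
at every ω-limit point `x` of the sequence `ξ k = f(x k, Π₀ U k)` that lies in
the interior of `conv D_x(k₀)` for some `k₀`, the cost of the spatial warm
start converges to the value `J_N^*(x)`. -/
theorem stmt_6 (n m N : ℕ) (hn : 0 < n) (hm : 0 < m) (hN : 0 < N)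
    (f : EuclideanSpace ℝ (Fin n) → EuclideanSpace ℝ (Fin m) → EuclideanSpace ℝ (Fin n))
    (J : EuclideanSpace ℝ (Fin (N * m)) → EuclideanSpace ℝ (Fin n) → ℝ)
    (Jstar : EuclideanSpace ℝ (Fin n) → ℝ)
    (Ψtw Ψo : EuclideanSpace ℝ (Fin (N * m)) → EuclideanSpace ℝ (Fin n) →
      EuclideanSpace ℝ (Fin (N * m)))
    (γ : EuclideanSpace ℝ (Fin (N * m)) → EuclideanSpace ℝ (Fin n) → ℝ)
    (proj0 : EuclideanSpace ℝ (Fin (N * m)) → EuclideanSpace ℝ (Fin m))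
    (hproj0 : ∀ U i, proj0 U i = U (Fin.castLE (Nat.le_mul_of_pos_left m hN) i))
    -- (a) joint convexity of the cost
    (hJconv : ConvexOn ℝ Set.univ
      (fun p : EuclideanSpace ℝ (Fin (N * m)) × EuclideanSpace ℝ (Fin n) => J p.1 p.2))
    -- value function
    (hJstar : ∀ x, IsGLB (Set.range fun U => J U x) (Jstar x))
    -- (b) decrease of the optimization update operator
    (hγ_cont : Continuous fun p : EuclideanSpace ℝ (Fin (N * m)) × EuclideanSpace ℝ (Fin n) =>
      γ p.1 p.2)
    (hγ_nonneg : ∀ U x, 0 ≤ γ U x)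
    (hγ_zero : ∀ U x, γ U x = 0 ↔ J U x = Jstar x)
    (ho : ∀ U x, J (Ψo U x) x - J U x ≤ -γ U x)
    -- data sets, spatial warm start, and closed loop
    (D : ℕ → Set ((EuclideanSpace ℝ (Fin (N * m)) × EuclideanSpace ℝ (Fin n)) × ℝ))
    (Dx : ℕ → Set (EuclideanSpace ℝ (Fin n)))
    (hDx : ∀ k, Dx k = (fun p : (EuclideanSpace ℝ (Fin (N * m)) ×
      EuclideanSpace ℝ (Fin n)) × ℝ => p.1.2) '' D k)
    (Ψsw : EuclideanSpace ℝ (Fin n) → ℕ → EuclideanSpace ℝ (Fin (N * m)))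
    (Ja : EuclideanSpace ℝ (Fin n) → ℕ → ℝ)
    (hsw_mem : ∀ k xbar, xbar ∈ convexHull ℝ (Dx k) →
      ((Ψsw xbar k, xbar), Ja xbar k) ∈ convexHull ℝ (D k))
    (hsw_min : ∀ k xbar, xbar ∈ convexHull ℝ (Dx k) →
      ∀ (V : EuclideanSpace ℝ (Fin (N * m))) (c : ℝ),
        ((V, xbar), c) ∈ convexHull ℝ (D k) → Ja xbar k ≤ c)
    (U W : ℕ → EuclideanSpace ℝ (Fin (N * m)))
    (X ξ : ℕ → EuclideanSpace ℝ (Fin n))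
    (w : ℕ → EuclideanSpace ℝ (Fin n))
    (iT : ℕ → ℕ) (hiT : ∀ k, 1 ≤ iT k)
    (hξ : ∀ k, ξ k = f (X k) (proj0 (U k)))
    (hW_t : ∀ k, (ξ k ∉ convexHull ℝ (Dx k) ∨
        J (Ψtw (U k) (X k)) (ξ k) < J (Ψsw (ξ k) k) (ξ k)) →
      W k = Ψtw (U k) (X k))
    (hW_s : ∀ k, ξ k ∈ convexHull ℝ (Dx k) →
      ¬ J (Ψtw (U k) (X k)) (ξ k) < J (Ψsw (ξ k) k) (ξ k) →
      W k = Ψsw (ξ k) k)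
    (hU : ∀ k, U (k + 1) = (fun V => Ψo V (ξ k))^[iT k] (W k))
    (hX : ∀ k, X (k + 1) = ξ k + w k)
    (hD : ∀ k, D (k + 1) = D k ∪ {((U (k + 1), ξ k), J (U (k + 1)) (ξ k))})
    (hD0fin : (D 0).Finite)
    (hD0 : ∀ p ∈ D 0, p.2 = J p.1.1 p.1.2)
    -- (c) compactness of the closed-loop data
    (K : Set (EuclideanSpace ℝ (Fin (N * m)) × EuclideanSpace ℝ (Fin n)))
    (hK : IsCompact K)
    (hcomp : ∀ k, (U k, X k) ∈ K ∧ (W k, ξ k) ∈ K) :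
    ∀ x : EuclideanSpace ℝ (Fin n),
      (∃ φ : ℕ → ℕ, StrictMono φ ∧ Tendsto (fun i => ξ (φ i)) atTop (𝓝 x)) →
      (∃ k₀ : ℕ, x ∈ interior (convexHull ℝ (Dx k₀))) →
      Tendsto (fun k => J (Ψsw x k) x) atTop (𝓝 (Jstar x)) := by
  rintro x ⟨φ, hφ, hφx⟩ ⟨k₀, hk₀⟩
  obtain rfl : Dx = fun k => dataStates (D k) := funext hDx
  exact stmt_6_general hJconv (continuousOn_univ.mp (hJconv.continuousOn isOpen_univ)) hJstar
    hγ_cont hγ_nonneg (fun V y => (hγ_zero V y).mp) (fun k => ⟨hsw_mem k, hsw_min k⟩)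
    (fun k hk => apply_le_of_min_selection (c := (J · (ξ k))) (fun h => hW_t k (.inr h))
      (hW_s k hk))
    (fun k => hU k ▸ apply_iterate_le_sub (c := (J · (ξ k))) (δ := (γ · (ξ k)))
      (fun V => by linarith [ho V (ξ k)]) (hγ_nonneg · (ξ k)) (hiT k) (W k))
    hD (fun p hp => (hD0 p hp).ge) hK (fun k => (hcomp k).2)
    (hφx.mapClusterPt.of_comp hφ.tendsto_atTop) hk₀
end

section
/- Let a, θ ∈ ℝ and let A be the real 3×3 matrix with rows (1, 0, −a·sin θ), (0, 1, a·cos θ), (0, 0, 1). Then the eigenvalues of the symmetric matrix AᵀA are exactly 1, 1 + a²/2 + |a|·√(1 + a²/4), and 1 + a²/2 − |a|·√(1 + a²/4). Consequently, the operator norm of A with respect to the Euclidean norm satisfies ‖A‖² = 1 + |a|·√(1 + a²/4) + a²/2. -/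
open Real Matrix

/-!
The squared norm of `A` is the norm of the positive operator `AᵀA`, and the norm of a positive
operator is its largest spectral value, because it is the supremum of the Rayleigh quotients. So
both claims reduce to the characteristic polynomial of `AᵀA`. The last column of `A` is
`(p, q, 1)` with `p² + q² = a²`, and the polynomial depends on `p` and `q` only through `p² + q²`:
it is `(X - 1) (X² - (2 + a²) X + 1)`.
-/

section NormAndSpectrum

variable {𝕜 : Type*} [RCLike 𝕜]

section Operator

variable {E : Type*} [NormedAddCommGroup E] [InnerProductSpace 𝕜 E] [Nontrivial E]
  {T : E →L[𝕜] E}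

theorem algebraMap_norm_mem_spectrum_of_isPositive (hT : T.IsPositive) :
    algebraMap ℝ 𝕜 ‖T‖ ∈ spectrum 𝕜 T := by
  by_contra hmem
  obtain ⟨ε, hε, hle⟩ := T.rayleighQuotient_le_of_norm_mem_resolventSet (not_not.mp hmem)
  have hnonneg (x : E) : 0 ≤ T.rayleighQuotient x :=
    div_nonneg (hT.re_inner_nonneg_left x) (sq_nonneg _)
  have hnorm : ‖T‖ ≤ ‖T‖ - ε := calc
    ‖T‖ = ⨆ x, |T.rayleighQuotient x| := T.norm_eq_iSup_rayleighQuotient hT.isSymmetric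
    _ ≤ ‖T‖ - ε := ciSup_le fun x ↦ (abs_of_nonneg (hnonneg x)).trans_le (hle x)
  linarith

theorem isGreatest_preimage_spectrum_of_isPositive [CompleteSpace E] (hT : T.IsPositive) :
    IsGreatest (algebraMap ℝ 𝕜 ⁻¹' spectrum 𝕜 T) ‖T‖ := by
  refine ⟨algebraMap_norm_mem_spectrum_of_isPositive hT, fun μ hμ ↦ ?_⟩
  calc
    μ ≤ ‖algebraMap ℝ 𝕜 μ‖ := by simpa only [norm_algebraMap'] using le_norm_self μ
    _ ≤ ‖T‖ := spectrum.norm_le_norm_of_mem hμ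

end Operator

section Matrix

variable {m n : Type*} [Fintype m] [Fintype n] [DecidableEq n]

open scoped Matrix.Norms.L2Operator ComplexOrder

theorem isGreatest_spectrum_of_posSemidef [Nonempty n] {B : Matrix n n 𝕜} (hB : B.PosSemidef) :
    IsGreatest (spectrum ℝ B) ‖B‖ := by
  have hpos : (toEuclideanCLM (𝕜 := 𝕜) B).IsPositive :=
    ContinuousLinearMap.isPositive_toLinearMap_iff _ |>.1 (isPositive_toEuclideanLin_iff.2 hB)
  have hgreatest := isGreatest_preimage_spectrum_of_isPositive hpos
  rwa [AlgEquiv.spectrum_eq, spectrum.preimage_algebraMap, l2_opNorm_toEuclideanCLM] at hgreatest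

theorem isGreatest_spectrum_conjTranspose_mul_self [Nonempty n] (A : Matrix m n 𝕜) :
    IsGreatest (spectrum ℝ (Aᴴ * A)) (‖A‖ ^ 2) := by
  rw [sq, ← l2_opNorm_conjTranspose_mul_self]
  exact isGreatest_spectrum_of_posSemidef (posSemidef_conjTranspose_mul_self A)

end Matrix

end NormAndSpectrum

open Polynomial in
theorem charpoly_transpose_mul_self_shear {R : Type*} [CommRing R] (p q : R) :
    (!![1, 0, p; 0, 1, q; 0, 0, 1]ᵀ * !![1, 0, p; 0, 1, q; 0, 0, 1]).charpoly =
      (X - 1) * (X ^ 2 - (2 + C (p ^ 2 + q ^ 2)) * X + 1) := by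
  have hgram : !![1, 0, p; 0, 1, q; 0, 0, 1]ᵀ * !![1, 0, p; 0, 1, q; 0, 0, 1] =
      !![1, 0, p; 0, 1, q; p, q, p ^ 2 + q ^ 2 + 1] := by
    ext i j
    fin_cases i <;> fin_cases j <;> simp [mul_apply, Fin.sum_univ_three, sq]
  have hcharmatrix : charmatrix !![1, 0, p; 0, 1, q; p, q, p ^ 2 + q ^ 2 + 1] =
      !![X - 1, 0, -C p; 0, X - 1, -C q; -C p, -C q, X - (C p ^ 2 + C q ^ 2 + 1)] := by
    ext1 i j
    fin_cases i <;> fin_cases j <;> simp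
  rw [hgram, charpoly, hcharmatrix, det_fin_three]
  simp only [of_apply, cons_val', cons_val_zero, cons_val_one, cons_val, C_add, C_pow]
  ring

theorem sq_sub_two_add_sq_mul_add_one_eq_zero_iff (a x : ℝ) :
    x ^ 2 - (2 + a ^ 2) * x + 1 = 0 ↔
      x = 1 + a ^ 2 / 2 + |a| * √(1 + a ^ 2 / 4) ∨
        x = 1 + a ^ 2 / 2 - |a| * √(1 + a ^ 2 / 4) := by
  have hsq : (|a| * √(1 + a ^ 2 / 4)) ^ 2 = a ^ 2 * (1 + a ^ 2 / 4) := by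
    rw [mul_pow, sq_abs, sq_sqrt (by positivity)]
  have hfactor : x ^ 2 - (2 + a ^ 2) * x + 1 =
      (x - (1 + a ^ 2 / 2 + |a| * √(1 + a ^ 2 / 4))) *
        (x - (1 + a ^ 2 / 2 - |a| * √(1 + a ^ 2 / 4))) := by
    linear_combination hsq
  rw [hfactor, mul_eq_zero, sub_eq_zero, sub_eq_zero]

theorem spectrum_transpose_mul_self_shear {a p q : ℝ} (hpq : p ^ 2 + q ^ 2 = a ^ 2) :
    spectrum ℝ (!![1, 0, p; 0, 1, q; 0, 0, 1]ᵀ * !![1, 0, p; 0, 1, q; 0, 0, 1]) =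
      {1, 1 + a ^ 2 / 2 + |a| * √(1 + a ^ 2 / 4), 1 + a ^ 2 / 2 - |a| * √(1 + a ^ 2 / 4)} := by
  ext μ
  rw [mem_spectrum_iff_isRoot_charpoly, charpoly_transpose_mul_self_shear, hpq]
  simp [sub_eq_zero (b := (1 : ℝ)), sq_sub_two_add_sq_mul_add_one_eq_zero_iff]

/-- For `A` the Jacobian of the discretized unicycle dynamics,
the eigenvalues of `AᵀA` are exactly `1`, `1 + a²/2 ± |a|√(1+a²/4)`, and hence
the Euclidean operator norm of `A` satisfies
`‖A‖² = 1 + |a|√(1+a²/4) + a²/2`. -/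
theorem stmt_14 (a θ : ℝ)
    (A : Matrix (Fin 3) (Fin 3) ℝ)
    (hA : A = !![1, 0, -a * Real.sin θ; 0, 1, a * Real.cos θ; 0, 0, 1]) :
    spectrum ℝ (Aᵀ * A) =
      {1, 1 + a ^ 2 / 2 + |a| * Real.sqrt (1 + a ^ 2 / 4),
        1 + a ^ 2 / 2 - |a| * Real.sqrt (1 + a ^ 2 / 4)} ∧
    ‖LinearMap.toContinuousLinearMap (Matrix.toEuclideanLin A)‖ ^ 2 =
      1 + |a| * Real.sqrt (1 + a ^ 2 / 4) + a ^ 2 / 2 := by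
  have hcol : (-a * sin θ) ^ 2 + (a * cos θ) ^ 2 = a ^ 2 := by
    linear_combination a ^ 2 * sin_sq_add_cos_sq θ
  have hspec := hA ▸ spectrum_transpose_mul_self_shear hcol
  refine ⟨hspec, ?_⟩
  have hnorm : IsGreatest (spectrum ℝ (Aᵀ * A))
      (‖LinearMap.toContinuousLinearMap (toEuclideanLin A)‖ ^ 2) :=
    conjTranspose_eq_transpose_of_trivial A ▸ isGreatest_spectrum_conjTranspose_mul_self A
  rw [hspec] at hnorm
  have hmax : IsGreatest
      {1, 1 + a ^ 2 / 2 + |a| * √(1 + a ^ 2 / 4), 1 + a ^ 2 / 2 - |a| * √(1 + a ^ 2 / 4)}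
      (1 + |a| * √(1 + a ^ 2 / 4) + a ^ 2 / 2) := by
    have : 0 ≤ |a| * √(1 + a ^ 2 / 4) := by positivity
    have := sq_nonneg a
    refine ⟨.inr (.inl (by ring)), ?_⟩
    rintro μ (rfl | rfl | rfl) <;> linarith
  exact hnorm.unique hmax
end
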